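/- Fractional product/difference estimate in square-function form: Let d ≥ 1, 0 < p < 1, 0 < σ < 1, 0 < s < σp, and let 1 < q, q₁, q₂, r₁, r₂, r₃ < ∞ satisfy 1/q = 1/q₁ + 1/q₂ = 1/r₁ + 1/r₂ + 1/r₃, (1−p)·r₁ > 1, and (p − s/σ)·r₂ > 1. Let G : ℂ → ℂ be Hölder continuous of order p with constant L, and let u, v, w : ℝ^d → ℂ be measurable. Then there is a constant C = C(d, p, s, σ, q, q₁, q₂, r₁, r₂, r₃) with ‖ D_s( w · (G∘(u+v) − G∘u) ) ‖_{L^q(ℝ^d)} ≤ C·L·[ ‖D_s(w)‖_{L^{q₁}(ℝ^d)} · ‖v‖_{L^{p q₂}(ℝ^d)}^p + ‖w‖_{L^{r₁}(ℝ^d)} · ‖v‖_{L^{(p − s/σ) r₂}(ℝ^d)}^{p − s/σ} · ( ‖D_σ(u+v)‖_{L^{(s/σ) r₃}(ℝ^d)} + ‖D_σ(u)‖_{L^{(s/σ) r₃}(ℝ^d)} )^{s/σ} ]. -/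

import Mathlib

/-!
Write `F = G ∘ (u + v) - G ∘ u`. The increment of `w F` from `x` to `x + r y` is
`F(x) Δw + w(x + r y) ΔF`. Since `|F| ≤ L |v| ^ p`, the first summand contributes at most
`L |v| ^ p D_s w` to the square function.

For the second summand, `|ΔF|` has two bounds by Hölder continuity of `G`: pairing the values at
`x + r y` with those at `x` gives `L (|Δ(u + v)| ^ p + |Δu| ^ p)`, and pairing `u + v` with `u` gives
`L (|v(x + r y)| ^ p + |v(x)| ^ p)`. Hölder's inequality on the unit ball (`ball_holder`) separates
the weight, which is bounded by `W = (M |w| ^ {1/(1-p)}) ^ {1-p}` with `M` the Hardy–Littlewood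
maximal operator. So the weighted mean increment is at most a constant times both `W a(r) ^ p` and
`W V ^ p`, where `a(r)` is the sum of the mean increments of `u + v` and `u`, and `V = M|v| + |v|`.
Put `D = D_σ(u + v) + D_σ u`. Using the first bound for `r ≤ A` and the second for `r > A`, with
`A ^ σ D = V`, gives `W V ^ {p - s/σ} D ^ {s/σ}` after integration in `r` (`scale_split`). The hypothesis
`s < σ p` is what makes the integral over `r ≤ A` converge. Together this is `pointwise_bound`.

Hölder's inequality in `x` and the maximal inequality `maxFn_strong` in the exponents
`(1 - p) r₁ > 1` and `(p - s/σ) r₂ > 1` conclude. The maximal inequality is derived here from the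
Vitali covering lemma (`maxFn_weak`) and a layer-cake argument. All quantities live in `[0, ∞]` with
`0 * ∞ = 0`, so degenerate values of `V`, `W`, `D` are separate cases in `scale_split`.
-/

open MeasureTheory ENNReal

/-- Strichartz's square function `D_s f(x)`, valued in `[0,∞]`. -/
noncomputable def sqFn (d : ℕ) (s : ℝ) (f : EuclideanSpace ℝ (Fin d) → ℂ)
    (x : EuclideanSpace ℝ (Fin d)) : ℝ≥0∞ :=
  (∫⁻ r in Set.Ioi (0 : ℝ),
      (∫⁻ y in Metric.ball (0 : EuclideanSpace ℝ (Fin d)) 1,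
          (‖f (x + r • y) - f x‖₊ : ℝ≥0∞)) ^ 2
        / ENNReal.ofReal (r ^ (1 + 2 * s))) ^ (1 / 2 : ℝ)

/-- The `L^q(ℝ^d)` norm of an `[0,∞]`-valued function. -/
noncomputable def lpNorm (d : ℕ) (q : ℝ) (f : EuclideanSpace ℝ (Fin d) → ℝ≥0∞) : ℝ≥0∞ :=
  (∫⁻ x, f x ^ q) ^ (1 / q)

/-! ### Power integrals and the layer-cake formula -/

lemma lintegral_Ioc_rpow {β A : ℝ} (hβ : 0 < β) (hA : 0 < A) :
    ∫⁻ r in Set.Ioc 0 A, ENNReal.ofReal (r ^ (β - 1)) = ENNReal.ofReal (A ^ β / β) := by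
  have hi : IntegrableOn (fun r : ℝ => r ^ (β - 1)) (Set.Ioc 0 A) := by
    have := intervalIntegral.intervalIntegrable_rpow' (a := 0) (b := A) (r := β - 1) (by linarith)
    rwa [intervalIntegrable_iff_integrableOn_Ioc_of_le hA.le] at this
  rw [← ofReal_integral_eq_lintegral_ofReal hi]
  · congr 1
    rw [← intervalIntegral.integral_of_le hA.le, integral_rpow (Or.inl (by linarith))]
    rw [sub_add_cancel, Real.zero_rpow hβ.ne', sub_zero]
  · filter_upwards [ae_restrict_mem measurableSet_Ioc] with r hr
    exact Real.rpow_nonneg hr.1.le _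

lemma lintegral_Ioi_rpow {c A : ℝ} (hc : 0 < c) (hA : 0 < A) :
    ∫⁻ r in Set.Ioi A, ENNReal.ofReal (r ^ (-1 - c)) = ENNReal.ofReal (A ^ (-c) / c) := by
  have hi := integrableOn_Ioi_rpow_of_lt (a := -1 - c) (by linarith) hA
  rw [← ofReal_integral_eq_lintegral_ofReal hi]
  · congr 1
    rw [integral_Ioi_rpow_of_lt (by linarith) hA]
    rw [show -1 - c + 1 = -c by ring, neg_div_neg_eq]
  · filter_upwards [ae_restrict_mem measurableSet_Ioi] with r hr
    exact Real.rpow_nonneg (hA.le.trans (le_of_lt hr)) _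

/-- The layer-cake formula `∫₀^a l ^ (α - 1) dl = a ^ α / α` for `a ∈ [0, ∞]`, with the range of
integration written as an indicator so that it can be swapped with an integral over `x`. -/
lemma layer_aux {α : ℝ} (hα : 0 < α) (a : ℝ≥0∞) :
    ∫⁻ l in Set.Ioi (0 : ℝ),
      {l : ℝ | ENNReal.ofReal l < a}.indicator (fun l => ENNReal.ofReal (l ^ (α - 1))) l
      = a ^ α / ENNReal.ofReal α := by
  have hfin : ∀ x : ℝ, 0 < x → ∫⁻ l in Set.Ioi (0 : ℝ),
      {l : ℝ | ENNReal.ofReal l < ENNReal.ofReal x}.indicator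
        (fun l => ENNReal.ofReal (l ^ (α - 1))) l
      = ENNReal.ofReal x ^ α / ENNReal.ofReal α := by
    intro x hx
    rw [ENNReal.ofReal_rpow_of_pos hx, ← ENNReal.ofReal_div_of_pos hα, ← lintegral_Ioc_rpow hα hx]
    have : {l : ℝ | ENNReal.ofReal l < ENNReal.ofReal x} = Set.Iio x := by
      ext l; simp [ENNReal.ofReal_lt_ofReal_iff hx]
    rw [this, lintegral_indicator measurableSet_Iio, Measure.restrict_restrict measurableSet_Iio,
      Set.inter_comm, Set.Ioi_inter_Iio]
    exact setLIntegral_congr Ioo_ae_eq_Ioc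
  rcases eq_or_ne a 0 with rfl | h0
  · simp [ENNReal.zero_rpow_of_pos hα]
  rcases eq_or_ne a ⊤ with rfl | ht
  · rw [ENNReal.top_rpow_of_pos hα, ENNReal.top_div_of_ne_top ENNReal.ofReal_ne_top, eq_top_iff]
    have key : ∀ x : ℝ, 0 < x → ENNReal.ofReal x ≤ ∫⁻ l in Set.Ioi (0 : ℝ),
      {l : ℝ | ENNReal.ofReal l < ⊤}.indicator
        (fun l => ENNReal.ofReal (l ^ (α - 1))) l := by
      intro x hx
      have hy : 0 < (x * α) ^ (1 / α) := by positivity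
      have h1 := hfin _ hy
      rw [ENNReal.ofReal_rpow_of_pos hy, ← ENNReal.ofReal_div_of_pos hα, ← Real.rpow_mul (by positivity),
        one_div, inv_mul_cancel₀ hα.ne', Real.rpow_one, mul_div_cancel_right₀ _ hα.ne'] at h1
      rw [← h1]
      refine lintegral_mono fun l => ?_
      refine Set.indicator_le_indicator_of_subset ?_ (fun _ => zero_le) l
      intro l hl
      exact ENNReal.ofReal_lt_top
    refine ENNReal.le_of_forall_nnreal_lt fun r _ => ?_
    refine le_trans ?_ (key (r + 1) (by positivity))
    rw [← ENNReal.ofReal_coe_nnreal]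
    exact ENNReal.ofReal_le_ofReal (by linarith)
  · have := hfin a.toReal (ENNReal.toReal_pos h0 ht)
    rwa [ENNReal.ofReal_toReal ht] at this

/-! ### The Hardy–Littlewood maximal function -/

/-- The Hardy–Littlewood maximal function of a `[0,∞]`-valued function. It is uncentred (the
supremum is over all balls containing `x`), which makes it lower semicontinuous for every `f`, so
measurable. -/
noncomputable def maxFn (d : ℕ) (f : EuclideanSpace ℝ (Fin d) → ℝ≥0∞)
    (x : EuclideanSpace ℝ (Fin d)) : ℝ≥0∞ :=
  ⨆ (z : EuclideanSpace ℝ (Fin d)) (r : ℝ) (_ : 0 < r ∧ x ∈ Metric.ball z r),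
    (∫⁻ y in Metric.ball z r, f y) / volume (Metric.ball z r)

lemma lt_maxFn_iff {d : ℕ} {f : EuclideanSpace ℝ (Fin d) → ℝ≥0∞} {x : EuclideanSpace ℝ (Fin d)}
    {l : ℝ≥0∞} : l < maxFn d f x ↔ ∃ z r, (0 < r ∧ x ∈ Metric.ball z r) ∧
      l < (∫⁻ y in Metric.ball z r, f y) / volume (Metric.ball z r) := by
  simp only [maxFn, lt_iSup_iff, exists_prop]

lemma measurable_maxFn {d : ℕ} (f : EuclideanSpace ℝ (Fin d) → ℝ≥0∞) :
    Measurable (maxFn d f) := by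
  refine measurable_of_Ioi fun l => IsOpen.measurableSet ?_
  rw [isOpen_iff_mem_nhds]
  intro x hx
  obtain ⟨z, r, ⟨hr, hxr⟩, h⟩ := lt_maxFn_iff.1 hx
  filter_upwards [Metric.isOpen_ball.mem_nhds hxr] with y hy
  exact lt_maxFn_iff.2 ⟨z, r, ⟨hr, hy⟩, h⟩

lemma volume_ball_pos {d : ℕ} (z : EuclideanSpace ℝ (Fin d)) {r : ℝ} (hr : 0 < r) :
    volume (Metric.ball z r) ≠ 0 := (Metric.measure_ball_pos _ _ hr).ne'

/-- Weak type `(1,1)` bound, from the Vitali covering lemma. -/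
lemma maxFn_weak {d : ℕ} (hd : 1 ≤ d) (f : EuclideanSpace ℝ (Fin d) → ℝ≥0∞) (l : ℝ≥0∞) :
    l * volume {x | l < maxFn d f x} ≤ 5 ^ d * ∫⁻ y, f y := by
  have : Nonempty (Fin d) := ⟨⟨0, hd⟩⟩
  rcases eq_or_ne l 0 with rfl | hl0
  · simp
  rcases eq_or_ne (∫⁻ y, f y) ⊤ with hI | hI
  · rw [hI, ENNReal.mul_top (by positivity)]; exact le_top
  set c := volume (Metric.ball (0 : EuclideanSpace ℝ (Fin d)) 1) with hc
  have hc0 : c ≠ 0 := volume_ball_pos 0 one_pos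
  let t : Set (EuclideanSpace ℝ (Fin d) × ℝ) := {a | 0 < a.2 ∧
    l * volume (Metric.ball a.1 a.2) < ∫⁻ y in Metric.ball a.1 a.2, f y}
  have hvol : ∀ (z : EuclideanSpace ℝ (Fin d)) (r : ℝ), 0 < r →
      volume (Metric.ball z r) = ENNReal.ofReal (r ^ d) * c := by
    intro z r hr
    rw [Measure.addHaar_ball_of_pos _ _ hr, finrank_euclideanSpace_fin]
  have hR : ∀ a ∈ t, a.2 ≤ max 1 ((∫⁻ y, f y) / (l * c)).toReal := by
    rintro ⟨z, r⟩ ⟨hr, h⟩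
    simp only at hr h ⊢
    by_contra! hcon
    obtain ⟨h1, h2⟩ := max_lt_iff.1 hcon
    have h3 : l * c * ENNReal.ofReal (r ^ d) ≤ ∫⁻ y, f y := by
      calc _ = l * volume (Metric.ball z r) := by rw [hvol z r hr]; ring
        _ ≤ _ := h.le.trans (setLIntegral_le_lintegral _ _)
    have hlc : l * c ≠ 0 := mul_ne_zero hl0 hc0
    have h4 : ENNReal.ofReal (r ^ d) ≤ (∫⁻ y, f y) / (l * c) := by
      rw [ENNReal.le_div_iff_mul_le (Or.inl hlc) (Or.inr hI), mul_comm]; exact h3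
    have h5 := ENNReal.toReal_mono (ENNReal.div_ne_top hI hlc) h4
    rw [ENNReal.toReal_ofReal (by positivity)] at h5
    have h6 : r ≤ r ^ d := le_self_pow₀ h1.le (by omega)
    linarith
  obtain ⟨u, hut, hdis, hcov⟩ := Vitali.exists_disjoint_subfamily_covering_enlargement_closedBall
    t (fun a => a.1) (fun a => a.2) _ hR 5 (by norm_num)
  have hdis' : u.PairwiseDisjoint fun a => Metric.ball a.1 a.2 :=
    hdis.mono fun a => Metric.ball_subset_closedBall
  have hcount : u.Countable := hdis'.countable_of_isOpen (fun a _ => Metric.isOpen_ball)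
    (fun a ha => ⟨a.1, Metric.mem_ball_self (hut ha).1⟩)
  have hsub : {x | l < maxFn d f x} ⊆ ⋃ a ∈ u, Metric.closedBall a.1 (5 * a.2) := by
    intro x hx
    obtain ⟨z, r, ⟨hr, hxr⟩, h⟩ := lt_maxFn_iff.1 hx
    have hat : (z, r) ∈ t := by
      refine ⟨hr, ?_⟩
      rwa [ENNReal.lt_div_iff_mul_lt (Or.inl (volume_ball_pos z hr))
        (Or.inl measure_ball_lt_top.ne)] at h
    obtain ⟨b, hb, hsb⟩ := hcov _ hat
    exact Set.mem_biUnion hb (hsb (Metric.ball_subset_closedBall hxr))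
  calc l * volume {x | l < maxFn d f x}
      ≤ l * ∑' a : u, volume (Metric.closedBall a.1.1 (5 * a.1.2)) := by
        gcongr
        exact (measure_mono hsub).trans (measure_biUnion_le _ hcount _)
    _ = ∑' a : u, 5 ^ d * (l * volume (Metric.ball a.1.1 a.1.2)) := by
        rw [← ENNReal.tsum_mul_left]
        congr 1; ext a
        have ha := (hut a.2).1
        rw [Measure.addHaar_closedBall _ _ (by positivity), hvol _ _ ha,
          finrank_euclideanSpace_fin, mul_pow, ENNReal.ofReal_mul (by positivity),
          ENNReal.ofReal_pow (by norm_num)]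
        rw [ENNReal.ofReal_ofNat]; ring
    _ ≤ ∑' a : u, 5 ^ d * ∫⁻ y in Metric.ball a.1.1 a.1.2, f y := by
        gcongr with a
        exact (hut a.2).2.le
    _ = 5 ^ d * ∫⁻ y in ⋃ a ∈ u, Metric.ball a.1 a.2, f y := by
        rw [ENNReal.tsum_mul_left, lintegral_biUnion hcount (fun _ _ => measurableSet_ball) hdis']
    _ ≤ _ := by gcongr 1; exact setLIntegral_le_lintegral _ _

/-- The weak type bound with `f` truncated from below at height `l / 2`; the discarded part of `f`
contributes at most `l / 2` to the maximal function. -/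
lemma maxFn_weak' {d : ℕ} (hd : 1 ≤ d) (f : EuclideanSpace ℝ (Fin d) → ℝ≥0∞)
    (l : ℝ≥0∞) :
    l * volume {x | l < maxFn d f x} ≤ 2 * 5 ^ d * ∫⁻ y, {y | l < 2 * f y}.indicator f y := by
  set g := {y | l < 2 * f y}.indicator f with hg
  have hfg : ∀ y, f y ≤ g y + l / 2 := by
    intro y
    by_cases h : l < 2 * f y
    · simp [hg, h]
    · rw [hg, Set.indicator_of_notMem (by simpa using h), zero_add,
        ENNReal.le_div_iff_mul_le (by simp) (by simp), mul_comm]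
      exact not_lt.1 h
  have hM : ∀ x, maxFn d f x ≤ maxFn d g x + l / 2 := by
    intro x
    refine iSup_le fun z => iSup_le fun r => iSup_le fun h => ?_
    have h0 := volume_ball_pos z h.1
    calc _ ≤ (∫⁻ y in Metric.ball z r, (g y + l / 2)) / volume (Metric.ball z r) := by
          gcongr with y; exact hfg y
      _ = (∫⁻ y in Metric.ball z r, g y) / volume (Metric.ball z r) + l / 2 := by
          rw [lintegral_add_right _ measurable_const, setLIntegral_const, ENNReal.add_div,
            ENNReal.mul_div_cancel_right h0 measure_ball_lt_top.ne]
      _ ≤ _ := by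
          gcongr
          exact le_iSup_of_le z (le_iSup_of_le r (le_iSup_of_le h le_rfl))
  have hsub : {x | l < maxFn d f x} ⊆ {x | l / 2 < maxFn d g x} := by
    intro x hx
    have h1 : l / 2 + l / 2 < maxFn d g x + l / 2 := by
      rw [ENNReal.add_halves]; exact lt_of_lt_of_le hx (hM x)
    exact lt_of_add_lt_add_right h1
  calc l * volume {x | l < maxFn d f x} ≤ l * volume {x | l / 2 < maxFn d g x} := by gcongr
    _ = 2 * (l / 2 * volume {x | l / 2 < maxFn d g x}) := by
        rw [← mul_assoc, ENNReal.mul_div_cancel (by simp) (by simp)]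
    _ ≤ 2 * (5 ^ d * ∫⁻ y, g y) := by gcongr 1; exact maxFn_weak hd g _
    _ = _ := by ring

/-- The Hardy–Littlewood maximal inequality in `L^t`, `t > 1`, obtained by integrating
`maxFn_weak'` against `t l ^ (t - 2) dl`. -/
lemma maxFn_strong {d : ℕ} (hd : 1 ≤ d) {t : ℝ} (ht : 1 < t) :
    ∃ C : ℝ≥0∞, C ≠ ⊤ ∧ ∀ f : EuclideanSpace ℝ (Fin d) → ℝ≥0∞, Measurable f →
      ∫⁻ x, maxFn d f x ^ t ≤ C * ∫⁻ x, f x ^ t := by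
  have ht0 : 0 < t := by linarith
  have ht1 : 0 < t - 1 := by linarith
  refine ⟨ENNReal.ofReal t * (2 * 5 ^ d) * (2 ^ (t - 1) / ENNReal.ofReal (t - 1)), ?_, ?_⟩
  · refine ENNReal.mul_ne_top (ENNReal.mul_ne_top ENNReal.ofReal_ne_top ?_)
      (ENNReal.div_ne_top (ENNReal.rpow_ne_top_of_nonneg ht1.le (by simp)) (by simpa using ht1))
    exact ENNReal.mul_ne_top (by simp) (ENNReal.pow_ne_top (by simp))
  intro f hf
  have hM := measurable_maxFn f
  have e1 : ∀ x, maxFn d f x ^ t = ENNReal.ofReal t * ∫⁻ l in Set.Ioi (0 : ℝ),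
      {l : ℝ | ENNReal.ofReal l < maxFn d f x}.indicator
        (fun l => ENNReal.ofReal (l ^ (t - 1))) l := by
    intro x
    rw [layer_aux ht0, ENNReal.mul_div_cancel (by simpa using ht0) (by simp)]
  have hme : MeasurableSet {a : EuclideanSpace ℝ (Fin d) × ℝ | ENNReal.ofReal a.2 < maxFn d f a.1} :=
    measurableSet_lt (by fun_prop) (by fun_prop)
  have hme' : MeasurableSet {a : ℝ × EuclideanSpace ℝ (Fin d) | ENNReal.ofReal a.1 < 2 * f a.2} :=
    measurableSet_lt (by fun_prop) (by fun_prop)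
  have hmeas1 : Measurable (Function.uncurry fun (x : EuclideanSpace ℝ (Fin d)) (l : ℝ) =>
      {l : ℝ | ENNReal.ofReal l < maxFn d f x}.indicator
        (fun l => ENNReal.ofReal (l ^ (t - 1))) l) := by
    have : Measurable ({a : EuclideanSpace ℝ (Fin d) × ℝ | ENNReal.ofReal a.2 < maxFn d f a.1}.indicator
      (fun a => ENNReal.ofReal (a.2 ^ (t - 1)))) := Measurable.indicator (by fun_prop) hme
    exact this
  have hmeas2 : Measurable (Function.uncurry fun (l : ℝ) (x : EuclideanSpace ℝ (Fin d)) =>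
      ENNReal.ofReal (l ^ (t - 1 - 1)) * {x | ENNReal.ofReal l < 2 * f x}.indicator f x) := by
    have : Measurable (fun a : ℝ × EuclideanSpace ℝ (Fin d) => ENNReal.ofReal (a.1 ^ (t - 1 - 1)) *
      {a : ℝ × EuclideanSpace ℝ (Fin d) | ENNReal.ofReal a.1 < 2 * f a.2}.indicator
      (fun a => f a.2) a) := Measurable.mul (by fun_prop) (Measurable.indicator (by fun_prop) hme')
    exact this
  calc ∫⁻ x, maxFn d f x ^ t
      = ENNReal.ofReal t * ∫⁻ x, ∫⁻ l in Set.Ioi (0 : ℝ),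
        {l : ℝ | ENNReal.ofReal l < maxFn d f x}.indicator
        (fun l => ENNReal.ofReal (l ^ (t - 1))) l := by
        simp_rw [e1]
        rw [lintegral_const_mul' _ _ ENNReal.ofReal_ne_top]
    _ = ENNReal.ofReal t * ∫⁻ l in Set.Ioi (0 : ℝ), ∫⁻ x,
        {l : ℝ | ENNReal.ofReal l < maxFn d f x}.indicator
        (fun l => ENNReal.ofReal (l ^ (t - 1))) l := by
        rw [lintegral_lintegral_swap hmeas1.aemeasurable]
    _ ≤ ENNReal.ofReal t * ∫⁻ l in Set.Ioi (0 : ℝ), 2 * 5 ^ d * ∫⁻ x,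
          ENNReal.ofReal (l ^ (t - 1 - 1)) * {x | ENNReal.ofReal l < 2 * f x}.indicator f x := by
        gcongr 1
        refine setLIntegral_mono' measurableSet_Ioi fun l hl => ?_
        have hl' : 0 < l := hl
        have : ∫⁻ x, {l : ℝ | ENNReal.ofReal l < maxFn d f x}.indicator
            (fun l => ENNReal.ofReal (l ^ (t - 1))) l
            = ENNReal.ofReal (l ^ (t - 1)) * volume {x | ENNReal.ofReal l < maxFn d f x} := by
          rw [← setLIntegral_const, ← lintegral_indicator (measurableSet_lt measurable_const hM)]
          rfl
        rw [this, lintegral_const_mul' _ _ ENNReal.ofReal_ne_top]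
        have e : l ^ (t - 1) = l ^ (t - 1 - 1) * l := by
          rw [← Real.rpow_add_one hl'.ne']; ring_nf
        rw [e, ENNReal.ofReal_mul (by positivity), mul_assoc]
        calc _ ≤ ENNReal.ofReal (l ^ (t - 1 - 1)) * (2 * 5 ^ d *
              ∫⁻ y, {y | ENNReal.ofReal l < 2 * f y}.indicator f y) := by
              gcongr 1; exact maxFn_weak' hd f _
          _ = _ := by ring
    _ = ENNReal.ofReal t * (2 * 5 ^ d) * ∫⁻ x, ∫⁻ l in Set.Ioi (0 : ℝ),
          ENNReal.ofReal (l ^ (t - 1 - 1)) * {x | ENNReal.ofReal l < 2 * f x}.indicator f x := by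
        rw [lintegral_const_mul' _ _ (ENNReal.mul_ne_top (by simp) (ENNReal.pow_ne_top (by simp))),
          lintegral_lintegral_swap hmeas2.aemeasurable]
        simp only [mul_assoc]
    _ = ENNReal.ofReal t * (2 * 5 ^ d) * ∫⁻ x, 2 ^ (t - 1) / ENNReal.ofReal (t - 1) * f x ^ t := by
        congr 2; ext x
        have : ∀ l, ENNReal.ofReal (l ^ (t - 1 - 1)) * {x | ENNReal.ofReal l < 2 * f x}.indicator f x
          = {l : ℝ | ENNReal.ofReal l < 2 * f x}.indicator
              (fun l => ENNReal.ofReal (l ^ (t - 1 - 1))) l * f x := by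
          intro l
          by_cases h : ENNReal.ofReal l < 2 * f x
          · simp [Set.indicator, h]
          · simp [Set.indicator, h]
        simp_rw [this]
        rw [lintegral_mul_const, layer_aux ht1, ENNReal.mul_rpow_of_nonneg _ _ ht1.le]
        · have e : f x ^ t = f x ^ (t - 1) * f x := by
            conv_rhs => rw [← ENNReal.rpow_one (f x), ← ENNReal.rpow_mul, one_mul]
            rw [← ENNReal.rpow_add_of_nonneg _ _ ht1.le zero_le_one, sub_add_cancel]
          rw [e, ENNReal.div_eq_inv_mul, ENNReal.div_eq_inv_mul]; ring
        · exact Measurable.indicator (by fun_prop) (measurableSet_lt (by fun_prop) measurable_const)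
    _ = _ := by
        rw [lintegral_const_mul' _ _
          (ENNReal.div_ne_top (ENNReal.rpow_ne_top_of_nonneg ht1.le (by simp)) (by simpa using ht1))]
        simp only [mul_assoc]

/-! ### Splitting the scale integral -/

lemma add_rpow_le_two {z : ℝ} (hz : 0 ≤ z) (a b : ℝ≥0∞) :
    (a + b) ^ z ≤ 2 ^ z * (a ^ z + b ^ z) := by
  wlog h : a ≤ b generalizing a b
  · rw [add_comm a b, add_comm (a ^ z)]
    exact this b a (le_of_not_ge h)
  calc (a + b) ^ z ≤ (2 * b) ^ z := by
        gcongr; rw [two_mul]; gcongr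
    _ = 2 ^ z * b ^ z := ENNReal.mul_rpow_of_nonneg _ _ hz
    _ ≤ _ := by gcongr; exact le_add_self

lemma add_sq_le_four (a b : ℝ≥0∞) : (a + b) ^ 2 ≤ 4 * (a ^ 2 + b ^ 2) := by
  have := add_rpow_le_two (z := 2) (by norm_num) a b
  simp only [ENNReal.rpow_ofNat] at this
  norm_num at this
  exact this

/-- A quasi-triangle inequality for the weighted `L²(dr)` norm in the square function. -/
lemma sq_half_add {a a₁ a₂ : ℝ → ℝ≥0∞} (h₁ : Measurable a₁) (ρ : ℝ → ℝ≥0∞)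
    (hρ : Measurable ρ) (h : ∀ r, 0 < r → a r ≤ a₁ r + a₂ r) :
    (∫⁻ r in Set.Ioi (0 : ℝ), a r ^ 2 / ρ r) ^ (1 / 2 : ℝ) ≤
      2 * ((∫⁻ r in Set.Ioi (0 : ℝ), a₁ r ^ 2 / ρ r) ^ (1 / 2 : ℝ) +
        (∫⁻ r in Set.Ioi (0 : ℝ), a₂ r ^ 2 / ρ r) ^ (1 / 2 : ℝ)) := by
  have h4 : (4 : ℝ≥0∞) ^ (1 / 2 : ℝ) = 2 := by
    rw [show (4 : ℝ≥0∞) = 2 ^ (2 : ℝ) by norm_num, ← ENNReal.rpow_mul]; norm_num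
  calc _ ≤ (∫⁻ r in Set.Ioi (0 : ℝ), 4 * (a₁ r ^ 2 / ρ r + a₂ r ^ 2 / ρ r)) ^ (1 / 2 : ℝ) := by
        refine ENNReal.rpow_le_rpow (setLIntegral_mono' measurableSet_Ioi fun r hr => ?_) (by norm_num)
        rw [← ENNReal.add_div, ← mul_div_assoc]
        gcongr
        exact (pow_le_pow_left' (h r hr) 2).trans (add_sq_le_four _ _)
    _ = 2 * ((∫⁻ r in Set.Ioi (0 : ℝ), a₁ r ^ 2 / ρ r) +
        (∫⁻ r in Set.Ioi (0 : ℝ), a₂ r ^ 2 / ρ r)) ^ (1 / 2 : ℝ) := by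
        rw [lintegral_const_mul' _ _ (by simp), lintegral_add_left (by fun_prop),
          ENNReal.mul_rpow_of_nonneg _ _ (by norm_num), h4]
    _ ≤ _ := by
        gcongr
        exact ENNReal.rpow_add_le_add_rpow _ _ (by norm_num) (by norm_num)

/-- The arithmetic of exponents at the scale `A` with `A ^ σ * δ = v`: both parts of the split
integral have size `(v ^ (p - s / σ) * δ ^ (s / σ)) ^ 2`. -/
lemma scale_real {p σ s v δ β A : ℝ} (hσ : 0 < σ) (hp1 : p < 1)
    (hβ : β = 2 * (σ * p - s) / (1 - p)) (hβ0 : 0 < β) (hv : 0 < v) (hδ : 0 < δ)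
    (hA : A = (v / δ) ^ (1 / σ)) :
    (δ ^ 2) ^ p * (A ^ β / β) ^ (1 - p) = (v ^ (p - s / σ) * δ ^ (s / σ)) ^ 2 * (1 / β) ^ (1 - p) ∧
    (v ^ p) ^ 2 * (A ^ (-(2 * s)) / (2 * s)) =
      (v ^ (p - s / σ) * δ ^ (s / σ)) ^ 2 * (1 / (2 * s)) := by
  obtain ⟨x, rfl⟩ : ∃ x, Real.exp x = v := ⟨_, Real.exp_log hv⟩
  obtain ⟨y, rfl⟩ : ∃ y, Real.exp y = δ := ⟨_, Real.exp_log hδ⟩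
  have hp' : (1 - p) ≠ 0 := by linarith
  subst hA
  constructor
  · rw [div_eq_mul_one_div (_ ^ β) β, Real.mul_rpow (by positivity) (by positivity), ← mul_assoc]
    congr 1
    simp only [← Real.exp_sub, ← Real.exp_mul, ← Real.exp_add, ← Real.exp_nat_mul]
    congr 1
    rw [hβ]; push_cast; field_simp; ring
  · rw [div_eq_mul_one_div (_ ^ (-(2 * s))) (2 * s), ← mul_assoc]
    congr 1
    simp only [← Real.exp_sub, ← Real.exp_mul, ← Real.exp_add, ← Real.exp_nat_mul]
    congr 1
    push_cast; field_simp; ring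

/-- If `b` is bounded by both `K a ^ p` and `K V ^ p`, then its weighted `L²(dr)` norm of order `s`
is bounded by the geometric interpolation `K V ^ (p - s / σ) D ^ (s / σ)`, where `D` is the weighted
norm of `a` of order `σ`. The integral is split at `A = (V / D) ^ (1 / σ)`; below `A`, Hölder's
inequality with exponents `1 / p` and `1 / (1 - p)` brings out `D`. -/
lemma scale_split {p σ s : ℝ} (hp : 0 < p) (hp1 : p < 1) (hσ : 0 < σ) (hs : 0 < s)
    (hsσp : s < σ * p) :
    ∃ C : ℝ≥0∞, C ≠ ⊤ ∧ ∀ (a b : ℝ → ℝ≥0∞) (K V : ℝ≥0∞), Measurable a →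
      (∀ r, 0 < r → b r ≤ K * a r ^ p) → (∀ r, 0 < r → b r ≤ K * V ^ p) →
      (∫⁻ r in Set.Ioi (0 : ℝ), b r ^ 2 / ENNReal.ofReal (r ^ (1 + 2 * s))) ^ (1 / 2 : ℝ) ≤
      C * (K * V ^ (p - s / σ) * ((∫⁻ r in Set.Ioi (0 : ℝ),
        a r ^ 2 / ENNReal.ofReal (r ^ (1 + 2 * σ))) ^ (1 / 2 : ℝ)) ^ (s / σ)) := by
  -- `β` makes `r ^ (-(1 + 2 * s)) = (r ^ (-(1 + 2 * σ))) ^ p * (r ^ (β - 1)) ^ (1 - p)`.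
  set β := 2 * (σ * p - s) / (1 - p) with hβ
  have hp1' : 0 < 1 - p := by linarith
  have hβ0 : 0 < β := div_pos (by linarith) hp1'
  have hα : 0 < p - s / σ := by rw [sub_pos, div_lt_iff₀ hσ]; linarith
  have hθ : 0 < s / σ := by positivity
  set c := (1 / β) ^ (1 - p) + 1 / (2 * s) with hc
  have hc0 : 0 < c := by positivity
  refine ⟨ENNReal.ofReal c ^ (1 / 2 : ℝ), ENNReal.rpow_ne_top_of_nonneg (by norm_num) (by simp), ?_⟩
  intro a b K V ha hb1 hb2
  have hC0 : ENNReal.ofReal c ^ (1 / 2 : ℝ) ≠ 0 := by simp [hc0]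
  set D2 := ∫⁻ r in Set.Ioi (0 : ℝ), a r ^ 2 / ENNReal.ofReal (r ^ (1 + 2 * σ)) with hD2
  set D := D2 ^ (1 / 2 : ℝ) with hD
  have hzero : (∀ᵐ r ∂(volume.restrict (Set.Ioi (0 : ℝ))), b r = 0) →
      (∫⁻ r in Set.Ioi (0 : ℝ), b r ^ 2 / ENNReal.ofReal (r ^ (1 + 2 * s))) ^ (1 / 2 : ℝ) = 0 := by
    intro h
    rw [lintegral_congr_ae (g := fun _ => 0)]
    · simp
    · filter_upwards [h] with r hr; simp [hr]
  -- Zero factors force `b = 0` almost everywhere, so `0 * ∞ = 0` on the right is harmless.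
  rcases eq_or_ne K 0 with hK0 | hK0
  · rw [hzero]
    · exact zero_le
    · filter_upwards [ae_restrict_mem measurableSet_Ioi] with r hr
      simpa [hK0] using hb1 r hr
  rcases eq_or_ne V 0 with hV0 | hV0
  · rw [hzero]
    · exact zero_le
    · filter_upwards [ae_restrict_mem measurableSet_Ioi] with r hr
      simpa [hV0, hp] using hb2 r hr
  rcases eq_or_ne D2 0 with hD0 | hD0
  · rw [hzero]
    · exact zero_le
    · rw [hD2, lintegral_eq_zero_iff (by fun_prop)] at hD0
      filter_upwards [ae_restrict_mem measurableSet_Ioi, hD0] with r hr h0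
      have h1 : a r = 0 := by
        have := (ENNReal.div_eq_zero_iff.1 h0).resolve_right (by simp)
        simpa using this
      simpa [h1, hp] using hb1 r hr
  have hDne : D ≠ 0 := by simp [hD, hD0]
  have hDθ : D ^ (s / σ) ≠ 0 := (ENNReal.rpow_eq_zero_iff_of_pos hθ).not.2 hDne
  have hVα : V ^ (p - s / σ) ≠ 0 := (ENNReal.rpow_eq_zero_iff_of_pos hα).not.2 hV0
  rcases eq_or_ne K ⊤ with hKt | hKt
  · rw [hKt, ENNReal.top_mul hVα, ENNReal.top_mul hDθ, ENNReal.mul_top hC0]; exact le_top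
  rcases eq_or_ne V ⊤ with hVt | hVt
  · rw [hVt, ENNReal.top_rpow_of_pos hα, ENNReal.mul_top hK0, ENNReal.top_mul hDθ,
      ENNReal.mul_top hC0]; exact le_top
  rcases eq_or_ne D ⊤ with hDt | hDt
  · rw [hDt, ENNReal.top_rpow_of_pos hθ, ENNReal.mul_top (mul_ne_zero hK0 hVα),
      ENNReal.mul_top hC0]; exact le_top
  obtain ⟨v, hv, hvV⟩ : ∃ v : ℝ, 0 < v ∧ V = ENNReal.ofReal v :=
    ⟨V.toReal, ENNReal.toReal_pos hV0 hVt, (ENNReal.ofReal_toReal hVt).symm⟩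
  obtain ⟨δ, hδ, hδD⟩ : ∃ v : ℝ, 0 < v ∧ D = ENNReal.ofReal v :=
    ⟨D.toReal, ENNReal.toReal_pos hDne hDt, (ENNReal.ofReal_toReal hDt).symm⟩
  have hD2' : D2 = ENNReal.ofReal (δ ^ 2) := by
    rw [ENNReal.ofReal_pow hδ.le, ← hδD, hD, ← ENNReal.rpow_natCast, ← ENNReal.rpow_mul]
    norm_num
  -- The two pointwise bounds balance at the scale `A`, where `A ^ σ * D = V`.
  set A := (v / δ) ^ (1 / σ) with hA
  have hA0 : 0 < A := by positivity
  obtain ⟨e1, e2⟩ := scale_real hσ hp1 hβ hβ0 hv hδ hA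
  set X := v ^ (p - s / σ) * δ ^ (s / σ) with hX
  have hX0 : 0 < X := by positivity
  have small : ∫⁻ r in Set.Ioc 0 A, b r ^ 2 / ENNReal.ofReal (r ^ (1 + 2 * s)) ≤
      K ^ 2 * ENNReal.ofReal (X ^ 2 * (1 / β) ^ (1 - p)) := by
    calc _ ≤ ∫⁻ r in Set.Ioc 0 A, K ^ 2 * ((a r ^ 2 / ENNReal.ofReal (r ^ (1 + 2 * σ))) ^ p *
            (ENNReal.ofReal (r ^ (β - 1))) ^ (1 - p)) := by
          refine setLIntegral_mono' measurableSet_Ioc fun r hr => ?_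
          have hr0 : 0 < r := hr.1
          calc b r ^ 2 / ENNReal.ofReal (r ^ (1 + 2 * s))
              ≤ (K * a r ^ p) ^ 2 / ENNReal.ofReal (r ^ (1 + 2 * s)) := by
                gcongr; exact hb1 r hr0
            _ = _ := by
                rw [mul_pow, mul_div_assoc]
                congr 1
                rw [div_eq_mul_inv, div_eq_mul_inv, ← ENNReal.ofReal_inv_of_pos (by positivity),
                  ← ENNReal.ofReal_inv_of_pos (by positivity),
                  ENNReal.mul_rpow_of_nonneg _ _ hp.le, mul_assoc,
                  ENNReal.ofReal_rpow_of_pos (by positivity),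
                  ENNReal.ofReal_rpow_of_pos (by positivity), ← ENNReal.ofReal_mul (by positivity)]
                congr 1
                · rw [← ENNReal.rpow_natCast, ← ENNReal.rpow_natCast, ← ENNReal.rpow_mul,
                    ← ENNReal.rpow_mul, mul_comm]
                · congr 1
                  rw [← Real.rpow_neg hr0.le, ← Real.rpow_neg hr0.le, ← Real.rpow_mul hr0.le,
                    ← Real.rpow_mul hr0.le, ← Real.rpow_add hr0]
                  congr 1
                  rw [hβ]; field_simp; ring
      _ = K ^ 2 * ∫⁻ r in Set.Ioc 0 A, ((a r ^ 2 / ENNReal.ofReal (r ^ (1 + 2 * σ))) ^ p *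
            (ENNReal.ofReal (r ^ (β - 1))) ^ (1 - p)) :=
          lintegral_const_mul' _ _ (ENNReal.pow_ne_top hKt)
      _ ≤ K ^ 2 * ((∫⁻ r in Set.Ioc 0 A, a r ^ 2 / ENNReal.ofReal (r ^ (1 + 2 * σ))) ^ p *
            (∫⁻ r in Set.Ioc 0 A, (ENNReal.ofReal (r ^ (β - 1)))) ^ (1 - p)) := by
          gcongr
          exact ENNReal.lintegral_mul_norm_pow_le (by fun_prop) (by fun_prop) hp.le hp1'.le
            (by ring)
      _ ≤ K ^ 2 * (D2 ^ p * (ENNReal.ofReal (A ^ β / β)) ^ (1 - p)) := by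
          rw [lintegral_Ioc_rpow hβ0 hA0]
          gcongr
          exact lintegral_mono_set Set.Ioc_subset_Ioi_self
      _ = _ := by
          rw [hD2', ENNReal.ofReal_rpow_of_pos (by positivity),
            ENNReal.ofReal_rpow_of_pos (by positivity), ← ENNReal.ofReal_mul (by positivity), e1]
  have large : ∫⁻ r in Set.Ioi A, b r ^ 2 / ENNReal.ofReal (r ^ (1 + 2 * s)) ≤
      K ^ 2 * ENNReal.ofReal (X ^ 2 * (1 / (2 * s))) := by
    calc _ ≤ ∫⁻ r in Set.Ioi A, (K * V ^ p) ^ 2 * ENNReal.ofReal (r ^ (-1 - 2 * s)) := by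
          refine setLIntegral_mono' measurableSet_Ioi fun r hr => ?_
          have hr0 : 0 < r := hA0.trans hr
          rw [div_eq_mul_inv, ← ENNReal.ofReal_inv_of_pos (by positivity), ← Real.rpow_neg hr0.le,
            show -(1 + 2 * s) = -1 - 2 * s by ring]
          gcongr; exact hb2 r hr0
      _ = (K * V ^ p) ^ 2 * ENNReal.ofReal (A ^ (-(2 * s)) / (2 * s)) := by
          rw [lintegral_const_mul _ (by fun_prop), lintegral_Ioi_rpow (by positivity) hA0]
      _ = _ := by
          rw [hvV, mul_pow, mul_assoc, ENNReal.ofReal_rpow_of_pos hv,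
            ← ENNReal.ofReal_pow (by positivity), ← ENNReal.ofReal_mul (by positivity), e2]
  have tot : ∫⁻ r in Set.Ioi (0 : ℝ), b r ^ 2 / ENNReal.ofReal (r ^ (1 + 2 * s)) ≤
      K ^ 2 * ENNReal.ofReal X ^ 2 * ENNReal.ofReal c := by
    rw [← Set.Ioc_union_Ioi_eq_Ioi hA0.le]
    refine (lintegral_union_le _ _ _).trans ((add_le_add small large).trans_eq ?_)
    rw [← mul_add, ← ENNReal.ofReal_add (by positivity) (by positivity), ← mul_add, ← hc,
      ENNReal.ofReal_mul (by positivity), ENNReal.ofReal_pow hX0.le, mul_assoc]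
  refine (ENNReal.rpow_le_rpow tot (by norm_num)).trans_eq ?_
  rw [ENNReal.mul_rpow_of_nonneg _ _ (by norm_num), ← mul_pow, ← ENNReal.rpow_natCast,
    ← ENNReal.rpow_mul]
  rw [hvV, hδD, ENNReal.ofReal_rpow_of_pos hv, ENNReal.ofReal_rpow_of_pos hδ, mul_assoc,
    ← ENNReal.ofReal_mul (by positivity), ← hX]
  norm_num
  rw [mul_comm]

/-! ### The pointwise bound -/

/-- Averages of `f` over the ball of radius `r` about `x`, rescaled to the unit ball, are controlled
by the maximal function at `x`, uniformly in `r`. -/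
lemma unit_ball_le_maxFn {d : ℕ} {f : EuclideanSpace ℝ (Fin d) → ℝ≥0∞} (hf : Measurable f)
    (x : EuclideanSpace ℝ (Fin d)) {r : ℝ} (hr : 0 < r) :
    ∫⁻ y in Metric.ball (0 : EuclideanSpace ℝ (Fin d)) 1, f (x + r • y) ≤
      volume (Metric.ball (0 : EuclideanSpace ℝ (Fin d)) 1) * maxFn d f x := by
  set c := volume (Metric.ball (0 : EuclideanSpace ℝ (Fin d)) 1) with hc
  have hc0 : c ≠ 0 := volume_ball_pos 0 one_pos
  have hct : c ≠ ⊤ := measure_ball_lt_top.ne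
  have hrd : 0 < r ^ d := by positivity
  have h1 : ∫⁻ y in Metric.ball (0 : EuclideanSpace ℝ (Fin d)) 1, f (x + r • y) =
      (ENNReal.ofReal (r ^ d))⁻¹ * ∫⁻ y in Metric.ball x r, f y := by
    set g := (Metric.ball x r).indicator f with hg
    have hgm : Measurable g := hf.indicator measurableSet_ball
    calc _ = ∫⁻ y, g (x + r • y) := by
          rw [← lintegral_indicator measurableSet_ball]
          congr 1; ext y
          by_cases h : ‖y‖ < 1
          · rw [Set.indicator_of_mem (by simpa using h), hg, Set.indicator_of_mem]
            simp only [Metric.mem_ball, dist_self_add_left, norm_smul, Real.norm_eq_abs, abs_of_pos hr]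
            nlinarith
          · rw [Set.indicator_of_notMem (by simpa using h), hg, Set.indicator_of_notMem]
            simp only [Metric.mem_ball, dist_self_add_left, norm_smul, Real.norm_eq_abs, abs_of_pos hr]
            nlinarith
      _ = ∫⁻ z, g (x + z) ∂(Measure.map (fun y => r • y) volume) := by
          rw [lintegral_map (by fun_prop) (by fun_prop)]
      _ = _ := by
          rw [Measure.map_addHaar_smul _ hr.ne', lintegral_smul_measure, lintegral_add_left_eq_self,
            finrank_euclideanSpace_fin, abs_of_pos (by positivity),
            ENNReal.ofReal_inv_of_pos hrd, lintegral_indicator measurableSet_ball, smul_eq_mul]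
  have h2 : (∫⁻ y in Metric.ball x r, f y) / volume (Metric.ball x r) ≤ maxFn d f x :=
    le_iSup_of_le x (le_iSup_of_le r (le_iSup_of_le ⟨hr, Metric.mem_ball_self hr⟩ le_rfl))
  rw [Measure.addHaar_ball_of_pos _ _ hr, finrank_euclideanSpace_fin, ← hc] at h2
  rw [h1]
  have hr0 : ENNReal.ofReal (r ^ d) ≠ 0 := by simpa using hrd
  calc _ = c * ((∫⁻ y in Metric.ball x r, f y) / (ENNReal.ofReal (r ^ d) * c)) := by
        rw [ENNReal.div_eq_inv_mul, ENNReal.mul_inv (Or.inl hr0) (Or.inl (by simp)),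
          mul_comm _ c⁻¹, mul_assoc, ← mul_assoc c, ENNReal.mul_inv_cancel hc0 hct, one_mul]
    _ ≤ _ := by gcongr

/-- The increment `∫_{|y|<1} |f(x+ry) - f(x)| dy` underlying the square function, not normalized by
the volume of the ball. -/
noncomputable def meanInc (d : ℕ) (f : EuclideanSpace ℝ (Fin d) → ℂ)
    (x : EuclideanSpace ℝ (Fin d)) (r : ℝ) : ℝ≥0∞ :=
  ∫⁻ y in Metric.ball (0 : EuclideanSpace ℝ (Fin d)) 1, ‖f (x + r • y) - f x‖ₑ

lemma sqFn_eq (d : ℕ) (s : ℝ) (f : EuclideanSpace ℝ (Fin d) → ℂ) (x : EuclideanSpace ℝ (Fin d)) :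
    sqFn d s f x = (∫⁻ r in Set.Ioi (0 : ℝ), meanInc d f x r ^ 2 / ENNReal.ofReal (r ^ (1 + 2 * s)))
      ^ (1 / 2 : ℝ) := rfl

lemma measurable_meanInc {d : ℕ} {f : EuclideanSpace ℝ (Fin d) → ℂ} (hf : Measurable f) :
    Measurable (Function.uncurry (meanInc d f)) := by
  have : Measurable (Function.uncurry fun (a : EuclideanSpace ℝ (Fin d) × ℝ)
      (y : EuclideanSpace ℝ (Fin d)) => ‖f (a.1 + a.2 • y) - f a.1‖ₑ) := by
    simp only [Function.uncurry_def]
    fun_prop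
  exact this.lintegral_prod_right'

lemma measurable_meanInc_right {d : ℕ} {f : EuclideanSpace ℝ (Fin d) → ℂ} (hf : Measurable f)
    (x : EuclideanSpace ℝ (Fin d)) : Measurable (meanInc d f x) :=
  (measurable_meanInc hf).of_uncurry_left

lemma measurable_sqFn {d : ℕ} {s : ℝ} {f : EuclideanSpace ℝ (Fin d) → ℂ} (hf : Measurable f) :
    Measurable (sqFn d s f) := by
  have h := measurable_meanInc hf
  have : Measurable (Function.uncurry fun (x : EuclideanSpace ℝ (Fin d)) (r : ℝ) =>
      meanInc d f x r ^ 2 / ENNReal.ofReal (r ^ (1 + 2 * s))) :=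
    Measurable.div (h.pow_const 2) (by fun_prop)
  exact (this.lintegral_prod_right').pow_const _

/-- Hölder's inequality on the unit ball with exponents `1 / (1 - p)` and `1 / p`; the factor
containing `g` is controlled by the maximal function of `g ^ (1 / (1 - p))`. -/
lemma ball_holder {d : ℕ} {p : ℝ} (hp : 0 < p) (hp1 : p < 1)
    {g h : EuclideanSpace ℝ (Fin d) → ℝ≥0∞} (hg : Measurable g) (hh : Measurable h)
    (x : EuclideanSpace ℝ (Fin d)) {r : ℝ} (hr : 0 < r) :
    ∫⁻ y in Metric.ball (0 : EuclideanSpace ℝ (Fin d)) 1, g (x + r • y) * h y ^ p ≤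
      volume (Metric.ball (0 : EuclideanSpace ℝ (Fin d)) 1) ^ (1 - p) *
        maxFn d (fun z => g z ^ (1 / (1 - p))) x ^ (1 - p) *
        (∫⁻ y in Metric.ball (0 : EuclideanSpace ℝ (Fin d)) 1, h y) ^ p := by
  have hp' : 0 < 1 - p := by linarith
  calc _ = ∫⁻ y in Metric.ball (0 : EuclideanSpace ℝ (Fin d)) 1,
        (g (x + r • y) ^ (1 / (1 - p))) ^ (1 - p) * h y ^ p := by
        congr 1; ext y
        rw [← ENNReal.rpow_mul, one_div, inv_mul_cancel₀ hp'.ne', ENNReal.rpow_one]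
    _ ≤ (∫⁻ y in Metric.ball (0 : EuclideanSpace ℝ (Fin d)) 1,
          g (x + r • y) ^ (1 / (1 - p))) ^ (1 - p) *
        (∫⁻ y in Metric.ball (0 : EuclideanSpace ℝ (Fin d)) 1, h y) ^ p :=
        ENNReal.lintegral_mul_norm_pow_le (by fun_prop) (by fun_prop) hp'.le hp.le (by ring)
    _ ≤ _ := by
        rw [← ENNReal.mul_rpow_of_nonneg _ _ hp'.le]
        gcongr
        exact unit_ball_le_maxFn (f := fun z => g z ^ (1 / (1 - p))) (by fun_prop) x hr

/-- The pointwise form of the estimate, in which maximal functions replace the norms of `w` and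
`v`. -/
lemma pointwise_bound {d : ℕ} {p σ s : ℝ} (hp : 0 < p) (hp1 : p < 1) (hσ : 0 < σ) (hs : 0 < s)
    (hsσp : s < σ * p) :
    ∃ C : ℝ≥0∞, C ≠ ⊤ ∧ ∀ (L : ℝ≥0∞) (G : ℂ → ℂ), Measurable G →
      (∀ a b : ℂ, ‖G a - G b‖ₑ ≤ L * ‖a - b‖ₑ ^ p) →
      ∀ (u v w : EuclideanSpace ℝ (Fin d) → ℂ), Measurable u → Measurable v → Measurable w → ∀ x,
        sqFn d s (fun z => w z * (G (u z + v z) - G (u z))) x ≤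
          C * L * (sqFn d s w x * ‖v x‖ₑ ^ p +
            maxFn d (fun z => ‖w z‖ₑ ^ (1 / (1 - p))) x ^ (1 - p) *
            (maxFn d (fun z => ‖v z‖ₑ) x + ‖v x‖ₑ) ^ (p - s / σ) *
            (sqFn d σ (fun z => u z + v z) x + sqFn d σ u x) ^ (s / σ)) := by
  obtain ⟨C₁, hC₁, H⟩ := scale_split hp hp1 hσ hs hsσp
  have hα : 0 < p - s / σ := by rw [sub_pos, div_lt_iff₀ hσ]; linarith
  have hθ : 0 < s / σ := by positivity
  set c := volume (Metric.ball (0 : EuclideanSpace ℝ (Fin d)) 1) with hc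
  have hct : c ≠ ⊤ := measure_ball_lt_top.ne
  set C₂ : ℝ≥0∞ := C₁ * (2 * c ^ (1 - p)) * c ^ (p - s / σ) * 2 ^ (s / σ) with hC₂
  have hC₂t : C₂ ≠ ⊤ := by
    refine ENNReal.mul_ne_top (ENNReal.mul_ne_top (ENNReal.mul_ne_top hC₁ ?_) ?_) ?_
    · exact ENNReal.mul_ne_top (by simp) (ENNReal.rpow_ne_top_of_nonneg (by linarith) hct)
    · exact ENNReal.rpow_ne_top_of_nonneg hα.le hct
    · exact ENNReal.rpow_ne_top_of_nonneg hθ.le (by simp)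
  refine ⟨2 * (1 + C₂), ENNReal.mul_ne_top (by simp) (ENNReal.add_ne_top.2 ⟨by simp, hC₂t⟩), ?_⟩
  intro L G hGm hG u v w hu hv hw x
  set F : EuclideanSpace ℝ (Fin d) → ℂ := fun z => G (u z + v z) - G (u z) with hF
  have hFm : Measurable F := by fun_prop
  have hFv : ∀ z, ‖F z‖ₑ ≤ L * ‖v z‖ₑ ^ p := by
    intro z
    simpa [hF] using hG (u z + v z) (u z)
  set W := maxFn d (fun z => ‖w z‖ₑ ^ (1 / (1 - p))) x ^ (1 - p) with hW
  set V := maxFn d (fun z => ‖v z‖ₑ) x + ‖v x‖ₑ with hV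
  set b : ℝ → ℝ≥0∞ := fun r => ∫⁻ y in Metric.ball (0 : EuclideanSpace ℝ (Fin d)) 1,
    ‖w (x + r • y)‖ₑ * ‖F (x + r • y) - F x‖ₑ with hb
  set a : ℝ → ℝ≥0∞ := fun r => meanInc d (fun z => u z + v z) x r + meanInc d u x r with ha
  have ham : Measurable a :=
    (measurable_meanInc_right (hu.add hv) x).add (measurable_meanInc_right hu x)
  -- If `|ΔF| ≤ L (A^p + B^p)`, Hölder bounds the weighted increment by the mean of `A + B`.
  have bound : ∀ r, 0 < r → ∀ A B : EuclideanSpace ℝ (Fin d) → ℝ≥0∞, Measurable A → Measurable B →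
      (∀ y, ‖F (x + r • y) - F x‖ₑ ≤ L * (A y ^ p + B y ^ p)) →
      b r ≤ L * (2 * c ^ (1 - p)) * W *
        (∫⁻ y in Metric.ball (0 : EuclideanSpace ℝ (Fin d)) 1, (A y + B y)) ^ p := by
    intro r hr A B hA hB hAB
    have hAB' : ∀ y, ‖F (x + r • y) - F x‖ₑ ≤ L * 2 * (A y + B y) ^ p := by
      intro y
      refine (hAB y).trans ?_
      rw [mul_assoc, two_mul]
      gcongr
      · exact le_self_add
      · exact le_add_self
    calc b r ≤ ∫⁻ y in Metric.ball (0 : EuclideanSpace ℝ (Fin d)) 1,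
          (L * 2) * (‖w (x + r • y)‖ₑ * (A y + B y) ^ p) := by
          refine lintegral_mono fun y => ?_
          calc _ ≤ ‖w (x + r • y)‖ₑ * (L * 2 * (A y + B y) ^ p) := by gcongr; exact hAB' y
            _ = _ := by ring
      _ = (L * 2) * ∫⁻ y in Metric.ball (0 : EuclideanSpace ℝ (Fin d)) 1,
          (‖w (x + r • y)‖ₑ * (A y + B y) ^ p) := lintegral_const_mul _ (by fun_prop)
      _ ≤ (L * 2) * (c ^ (1 - p) * W *
          (∫⁻ y in Metric.ball (0 : EuclideanSpace ℝ (Fin d)) 1, (A y + B y)) ^ p) := by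
          gcongr 1
          exact ball_holder hp hp1 (g := fun z => ‖w z‖ₑ) (by fun_prop) (hA.add hB) x hr
      _ = _ := by ring
  -- The increments of `u + v` and `u` give the bound used at small scales.
  have hb1 : ∀ r, 0 < r → b r ≤ L * (2 * c ^ (1 - p)) * W * a r ^ p := by
    intro r hr
    have := bound r hr (fun y => ‖(u (x + r • y) + v (x + r • y)) - (u x + v x)‖ₑ)
      (fun y => ‖u (x + r • y) - u x‖ₑ) (by fun_prop) (by fun_prop) (fun y => by
        have e : F (x + r • y) - F x = (G (u (x + r • y) + v (x + r • y)) - G (u x + v x)) -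
          (G (u (x + r • y)) - G (u x)) := by simp only [hF]; ring
        rw [e, mul_add]
        exact (enorm_sub_le).trans (add_le_add (hG _ _) (hG _ _)))
    rwa [lintegral_add_left (by fun_prop)] at this
  -- The sizes of `v` at `x + r y` and at `x` give the bound used at large scales.
  have hb2 : ∀ r, 0 < r → b r ≤ L * (2 * c ^ (1 - p)) * W * (c * V) ^ p := by
    intro r hr
    refine (bound r hr (fun y => ‖v (x + r • y)‖ₑ) (fun y => ‖v x‖ₑ) (by fun_prop) (by fun_prop)
      (fun y => by
        rw [mul_add]
        exact (enorm_sub_le).trans (add_le_add (hFv _) (hFv _)))).trans ?_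
    gcongr
    rw [lintegral_add_right _ measurable_const, setLIntegral_const, hV, mul_add, mul_comm _ c]
    gcongr
    exact unit_ball_le_maxFn (f := fun z => ‖v z‖ₑ) (by fun_prop) x hr
  have h2 := H a b _ _ ham hb1 hb2
  have hD : (∫⁻ r in Set.Ioi (0 : ℝ), a r ^ 2 / ENNReal.ofReal (r ^ (1 + 2 * σ))) ^ (1 / 2 : ℝ) ≤
      2 * (sqFn d σ (fun z => u z + v z) x + sqFn d σ u x) := by
    rw [sqFn_eq, sqFn_eq]
    exact sq_half_add (measurable_meanInc_right (hu.add hv) x) _ (by fun_prop) (fun r _ => le_rfl)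
  have h1 : (∫⁻ r in Set.Ioi (0 : ℝ), (‖F x‖ₑ * meanInc d w x r) ^ 2 /
      ENNReal.ofReal (r ^ (1 + 2 * s))) ^ (1 / 2 : ℝ) ≤ L * (sqFn d s w x * ‖v x‖ₑ ^ p) := by
    have : ∀ r : ℝ, (‖F x‖ₑ * meanInc d w x r) ^ 2 / ENNReal.ofReal (r ^ (1 + 2 * s)) =
        ‖F x‖ₑ ^ 2 * (meanInc d w x r ^ 2 / ENNReal.ofReal (r ^ (1 + 2 * s))) := by
      intro r; rw [mul_pow, mul_div_assoc]
    simp_rw [this]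
    rw [lintegral_const_mul' _ _ (by simp), ENNReal.mul_rpow_of_nonneg _ _ (by norm_num),
      ← sqFn_eq, ← ENNReal.rpow_natCast, ← ENNReal.rpow_mul]
    norm_num
    calc _ ≤ (L * ‖v x‖ₑ ^ p) * sqFn d s w x := by gcongr; exact hFv x
      _ = _ := by ring
  have hmain : sqFn d s (fun z => w z * F z) x ≤
      2 * ((∫⁻ r in Set.Ioi (0 : ℝ), (‖F x‖ₑ * meanInc d w x r) ^ 2 /
      ENNReal.ofReal (r ^ (1 + 2 * s))) ^ (1 / 2 : ℝ) +
      (∫⁻ r in Set.Ioi (0 : ℝ), b r ^ 2 / ENNReal.ofReal (r ^ (1 + 2 * s))) ^ (1 / 2 : ℝ)) := by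
    rw [sqFn_eq]
    refine sq_half_add ((measurable_meanInc_right hw x).const_mul _) _ (by fun_prop) (fun r _ => ?_)
    rw [meanInc, meanInc, ← lintegral_const_mul _ (by fun_prop), ← lintegral_add_left (by fun_prop)]
    refine lintegral_mono fun y => ?_
    have e : w (x + r • y) * F (x + r • y) - w x * F x = F x * (w (x + r • y) - w x) +
      w (x + r • y) * (F (x + r • y) - F x) := by ring
    simp only
    rw [e, ← enorm_mul, ← enorm_mul]
    exact enorm_add_le _ _
  refine hmain.trans ?_
  have h3 : (∫⁻ r in Set.Ioi (0 : ℝ), b r ^ 2 / ENNReal.ofReal (r ^ (1 + 2 * s))) ^ (1 / 2 : ℝ) ≤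
      C₂ * L * (W * V ^ (p - s / σ) *
        (sqFn d σ (fun z => u z + v z) x + sqFn d σ u x) ^ (s / σ)) := by
    refine h2.trans ?_
    calc _ ≤ C₁ * (L * (2 * c ^ (1 - p)) * W * (c * V) ^ (p - s / σ) *
          (2 * (sqFn d σ (fun z => u z + v z) x + sqFn d σ u x)) ^ (s / σ)) := by gcongr
      _ = _ := by
        rw [ENNReal.mul_rpow_of_nonneg _ _ hα.le, ENNReal.mul_rpow_of_nonneg _ _ hθ.le, hC₂]
        ring
  set S := sqFn d s w x * ‖v x‖ₑ ^ p
  set T := W * V ^ (p - s / σ) * (sqFn d σ (fun z => u z + v z) x + sqFn d σ u x) ^ (s / σ)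
  calc _ ≤ 2 * (L * S + C₂ * L * T) := by gcongr
    _ ≤ 2 * ((1 + C₂) * L * S + (1 + C₂) * L * T) := by
        gcongr
        · calc L = 1 * L := (one_mul L).symm
            _ ≤ _ := by gcongr; exact le_self_add
        · exact le_add_self
    _ = _ := by ring

/-! ### Norm estimates -/

lemma lpNorm_mono {d : ℕ} {q : ℝ} (hq : 0 < q) {f g : EuclideanSpace ℝ (Fin d) → ℝ≥0∞}
    (h : ∀ x, f x ≤ g x) : lpNorm d q f ≤ lpNorm d q g := by
  unfold _root_.lpNorm
  gcongr with x
  exact h x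

lemma lpNorm_const_mul {d : ℕ} {q : ℝ} (hq : 0 < q) {c : ℝ≥0∞} (hc : c ≠ ⊤)
    (f : EuclideanSpace ℝ (Fin d) → ℝ≥0∞) :
    lpNorm d q (fun x => c * f x) = c * lpNorm d q f := by
  unfold _root_.lpNorm
  simp_rw [ENNReal.mul_rpow_of_nonneg _ _ hq.le]
  rw [lintegral_const_mul' _ _ (ENNReal.rpow_ne_top_of_nonneg hq.le hc),
    ENNReal.mul_rpow_of_nonneg _ _ (by positivity), ← ENNReal.rpow_mul, mul_one_div_cancel hq.ne',
    ENNReal.rpow_one]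

lemma lpNorm_add {d : ℕ} {q : ℝ} (hq : 1 ≤ q) {f g : EuclideanSpace ℝ (Fin d) → ℝ≥0∞}
    (hf : Measurable f) (hg : Measurable g) :
    lpNorm d q (fun x => f x + g x) ≤ lpNorm d q f + lpNorm d q g :=
  ENNReal.lintegral_Lp_add_le hf.aemeasurable hg.aemeasurable hq

/-- The quasi-triangle inequality in `L^t` for every `t > 0`. -/
lemma lpNorm_add_quasi {d : ℕ} {t : ℝ} (ht : 0 < t) {f g : EuclideanSpace ℝ (Fin d) → ℝ≥0∞}
    (hf : Measurable f) :
    lpNorm d t (fun x => f x + g x) ≤ 2 * 2 ^ (1 / t) * (lpNorm d t f + lpNorm d t g) := by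
  unfold _root_.lpNorm
  calc _ ≤ (∫⁻ x, 2 ^ t * (f x ^ t + g x ^ t)) ^ (1 / t) := by
        gcongr with x; exact add_rpow_le_two ht.le _ _
    _ = 2 * ((∫⁻ x, f x ^ t) + ∫⁻ x, g x ^ t) ^ (1 / t) := by
        rw [lintegral_const_mul' _ _ (ENNReal.rpow_ne_top_of_nonneg ht.le (by simp)),
          ENNReal.mul_rpow_of_nonneg _ _ (by positivity), ← ENNReal.rpow_mul,
          mul_one_div_cancel ht.ne', ENNReal.rpow_one, lintegral_add_left (by fun_prop)]
    _ ≤ _ := by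
        rw [mul_assoc]
        gcongr
        exact add_rpow_le_two (by positivity) _ _

lemma lpNorm_mul {d : ℕ} {q a b : ℝ} (hq : 0 < q) (ha : 0 < a) (hb : 0 < b)
    (h : 1 / q = 1 / a + 1 / b) {f g : EuclideanSpace ℝ (Fin d) → ℝ≥0∞}
    (hf : Measurable f) (hg : Measurable g) :
    lpNorm d q (fun x => f x * g x) ≤ lpNorm d a f * lpNorm d b g := by
  refine ENNReal.lintegral_Lp_mul_le_Lq_mul_Lr hq ?_ h _ hf.aemeasurable hg.aemeasurable
  rw [← one_div_lt_one_div ha hq, h]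
  have : 0 < 1 / b := by positivity
  linarith

lemma lpNorm_rpow {d : ℕ} {q a : ℝ} (ha : 0 < a) (f : EuclideanSpace ℝ (Fin d) → ℝ≥0∞) :
    lpNorm d q (fun x => f x ^ a) = lpNorm d (a * q) f ^ a := by
  unfold _root_.lpNorm
  simp_rw [← ENNReal.rpow_mul]
  congr 1
  rw [one_div, one_div, mul_inv_rev, mul_assoc, inv_mul_cancel₀ ha.ne', mul_one]

lemma lpNorm_maxFn {d : ℕ} (hd : 1 ≤ d) {t : ℝ} (ht : 1 < t) :
    ∃ C : ℝ≥0∞, C ≠ ⊤ ∧ ∀ f : EuclideanSpace ℝ (Fin d) → ℝ≥0∞, Measurable f →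
      lpNorm d t (maxFn d f) ≤ C * lpNorm d t f := by
  obtain ⟨C, hC, H⟩ := maxFn_strong hd ht
  have ht0 : 0 ≤ 1 / t := by positivity
  refine ⟨C ^ (1 / t), ENNReal.rpow_ne_top_of_nonneg ht0 hC, fun f hf => ?_⟩
  unfold _root_.lpNorm
  rw [← ENNReal.mul_rpow_of_nonneg _ _ ht0]
  exact ENNReal.rpow_le_rpow (H f hf) ht0

/-- The estimate for measurable `G` with extended nonnegative constants: `pointwise_bound` followed
by Hölder's inequality and the maximal inequality in `x`. -/
lemma sq_fn_product_estimate_aux {d : ℕ} (hd : 1 ≤ d) {p σ s q q₁ q₂ r₁ r₂ r₃ : ℝ}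
    (hp : 0 < p) (hp1 : p < 1) (hσ : 0 < σ) (hs : 0 < s) (hsσp : s < σ * p)
    (hq : 1 < q) (hq₁ : 1 < q₁) (hq₂ : 1 < q₂)
    (hr₁ : 1 < r₁) (hr₂ : 1 < r₂) (hr₃ : 1 < r₃)
    (hsum1 : 1 / q = 1 / q₁ + 1 / q₂) (hsum2 : 1 / q = 1 / r₁ + 1 / r₂ + 1 / r₃)
    (hcond1 : 1 < (1 - p) * r₁) (hcond2 : 1 < (p - s / σ) * r₂) :
    ∃ C : ℝ≥0∞, C ≠ ⊤ ∧ ∀ (L : ℝ≥0∞) (G : ℂ → ℂ), L ≠ ⊤ → Measurable G →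
      (∀ a b : ℂ, ‖G a - G b‖ₑ ≤ L * ‖a - b‖ₑ ^ p) →
      ∀ (u v w : EuclideanSpace ℝ (Fin d) → ℂ), Measurable u → Measurable v → Measurable w →
        lpNorm d q (sqFn d s (fun z => w z * (G (u z + v z) - G (u z)))) ≤
          C * L * (lpNorm d q₁ (sqFn d s w) * (lpNorm d (p * q₂) (fun z => ‖v z‖ₑ)) ^ p +
             lpNorm d r₁ (fun z => ‖w z‖ₑ) *
                (lpNorm d ((p - s / σ) * r₂) (fun z => ‖v z‖ₑ)) ^ (p - s / σ) *
                (lpNorm d ((s / σ) * r₃) (sqFn d σ (fun z => u z + v z)) +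
                 lpNorm d ((s / σ) * r₃) (sqFn d σ u)) ^ (s / σ)) := by
  obtain ⟨C₀, hC₀, H⟩ := pointwise_bound (d := d) hp hp1 hσ hs hsσp
  obtain ⟨C₁, hC₁, H₁⟩ := lpNorm_maxFn hd hcond1
  obtain ⟨C₂, hC₂, H₂⟩ := lpNorm_maxFn hd hcond2
  have hp' : 0 < 1 - p := by linarith
  have hα : 0 < p - s / σ := by rw [sub_pos, div_lt_iff₀ hσ]; linarith
  have hθ : 0 < s / σ := by positivity
  have ht : 0 < s / σ * r₃ := by positivity
  set C₃ : ℝ≥0∞ := 2 * 2 ^ (1 / (s / σ * r₃)) with hC₃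
  have hC₃t : C₃ ≠ ⊤ :=
    ENNReal.mul_ne_top (by simp) (ENNReal.rpow_ne_top_of_nonneg (by positivity) (by simp))
  set C₄ : ℝ≥0∞ := C₁ ^ (1 - p) * (C₂ + 1) ^ (p - s / σ) * C₃ ^ (s / σ) with hC₄
  have hC₄t : C₄ ≠ ⊤ := by
    refine ENNReal.mul_ne_top (ENNReal.mul_ne_top ?_ ?_) ?_
    · exact ENNReal.rpow_ne_top_of_nonneg hp'.le hC₁
    · exact ENNReal.rpow_ne_top_of_nonneg hα.le (ENNReal.add_ne_top.2 ⟨hC₂, by simp⟩)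
    · exact ENNReal.rpow_ne_top_of_nonneg hθ.le hC₃t
  refine ⟨C₀ * (1 + C₄), ENNReal.mul_ne_top hC₀ (ENNReal.add_ne_top.2 ⟨by simp, hC₄t⟩), ?_⟩
  intro L G hL hGm hG u v w hu hv hw
  have mw := measurable_sqFn (s := s) hw
  have mu := measurable_sqFn (s := σ) hu
  have muv := measurable_sqFn (s := σ) (hu.add hv)
  set f₁ := sqFn d s w with hf₁
  set W := maxFn d (fun z => ‖w z‖ₑ ^ (1 / (1 - p))) with hW
  set M := maxFn d (fun z => ‖v z‖ₑ) with hM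
  have mW : Measurable W := measurable_maxFn _
  have mM : Measurable M := measurable_maxFn _
  set D₁ := sqFn d σ (fun z => u z + v z) with hD₁
  set D₂ := sqFn d σ u with hD₂
  have mD₁ : Measurable D₁ := muv
  have bW : lpNorm d r₁ (fun x => W x ^ (1 - p)) ≤ C₁ ^ (1 - p) * lpNorm d r₁ (fun z => ‖w z‖ₑ) := by
    rw [lpNorm_rpow hp']
    refine (ENNReal.rpow_le_rpow (H₁ _ (by fun_prop)) hp'.le).trans_eq ?_
    rw [lpNorm_rpow (by positivity), ENNReal.mul_rpow_of_nonneg _ _ hp'.le, ← ENNReal.rpow_mul,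
      ← mul_assoc, one_div, inv_mul_cancel₀ hp'.ne', one_mul, ENNReal.rpow_one]
  have bV : lpNorm d r₂ (fun x => (M x + ‖v x‖ₑ) ^ (p - s / σ)) ≤ (C₂ + 1) ^ (p - s / σ) *
      lpNorm d ((p - s / σ) * r₂) (fun z => ‖v z‖ₑ) ^ (p - s / σ) := by
    rw [lpNorm_rpow hα, ← ENNReal.mul_rpow_of_nonneg _ _ hα.le]
    gcongr
    refine (lpNorm_add hcond2.le mM (by fun_prop)).trans ?_
    rw [add_mul, one_mul]
    gcongr
    exact H₂ _ (by fun_prop)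
  have bD : lpNorm d r₃ (fun x => (D₁ x + D₂ x) ^ (s / σ)) ≤ C₃ ^ (s / σ) *
      (lpNorm d ((s / σ) * r₃) D₁ + lpNorm d ((s / σ) * r₃) D₂) ^ (s / σ) := by
    rw [lpNorm_rpow hθ, ← ENNReal.mul_rpow_of_nonneg _ _ hθ.le]
    gcongr
    exact lpNorm_add_quasi ht mD₁
  have q0 : 0 < q := by linarith
  -- The intermediate exponent `m` with `1 / m = 1 / r₂ + 1 / r₃` for the triple Hölder inequality.
  obtain ⟨m, hm, hm'⟩ : ∃ m : ℝ, 0 < m ∧ 1 / m = 1 / r₂ + 1 / r₃ :=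
    ⟨1 / (1 / r₂ + 1 / r₃), by positivity, by simp⟩
  have first : lpNorm d q (fun x => f₁ x * ‖v x‖ₑ ^ p) ≤
      lpNorm d q₁ f₁ * (lpNorm d (p * q₂) (fun z => ‖v z‖ₑ)) ^ p := by
    rw [← lpNorm_rpow hp]
    exact lpNorm_mul q0 (by linarith) (by linarith) hsum1 mw (by fun_prop)
  have second : lpNorm d q (fun x => W x ^ (1 - p) * (M x + ‖v x‖ₑ) ^ (p - s / σ) *
      (D₁ x + D₂ x) ^ (s / σ)) ≤ C₄ * (lpNorm d r₁ (fun z => ‖w z‖ₑ) *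
                (lpNorm d ((p - s / σ) * r₂) (fun z => ‖v z‖ₑ)) ^ (p - s / σ) *
                (lpNorm d ((s / σ) * r₃) D₁ + lpNorm d ((s / σ) * r₃) D₂) ^ (s / σ)) := by
    simp_rw [mul_assoc]
    calc _ ≤ lpNorm d r₁ (fun x => W x ^ (1 - p)) *
          (lpNorm d r₂ (fun x => (M x + ‖v x‖ₑ) ^ (p - s / σ)) *
            lpNorm d r₃ (fun x => (D₁ x + D₂ x) ^ (s / σ))) := by
          refine (lpNorm_mul (a := r₁) (b := m) (f := fun x => W x ^ (1 - p))
            (g := fun x => (M x + ‖v x‖ₑ) ^ (p - s / σ) * (D₁ x + D₂ x) ^ (s / σ))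
            q0 (by linarith) hm (by rw [hsum2, hm']; ring) (by fun_prop)
            (by fun_prop)).trans ?_
          gcongr
          exact lpNorm_mul (f := fun x => (M x + ‖v x‖ₑ) ^ (p - s / σ))
            (g := fun x => (D₁ x + D₂ x) ^ (s / σ)) hm (by linarith) (by linarith) hm' (by fun_prop) (by fun_prop)
      _ ≤ _ := mul_le_mul' bW (mul_le_mul' bV bD)
      _ = _ := by rw [hC₄]; ring
  have hadd := lpNorm_add (f := fun x => f₁ x * ‖v x‖ₑ ^ p)
    (g := fun x => W x ^ (1 - p) * (M x + ‖v x‖ₑ) ^ (p - s / σ) * (D₁ x + D₂ x) ^ (s / σ))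
    hq.le (by fun_prop) (by fun_prop)
  refine (lpNorm_mono q0 (H L G hGm hG u v w hu hv hw)).trans ?_
  rw [lpNorm_const_mul q0 (ENNReal.mul_ne_top hC₀ hL)]
  refine (mul_le_mul_right hadd _).trans ?_
  refine (mul_le_mul_right (add_le_add first second) _).trans ?_
  generalize lpNorm d q₁ f₁ * lpNorm d (p * q₂) (fun z => ‖v z‖ₑ) ^ p = S
  generalize lpNorm d r₁ (fun z => ‖w z‖ₑ) *
                (lpNorm d ((p - s / σ) * r₂) (fun z => ‖v z‖ₑ)) ^ (p - s / σ) *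
                (lpNorm d ((s / σ) * r₃) D₁ + lpNorm d ((s / σ) * r₃) D₂) ^ (s / σ) = T
  calc C₀ * L * (S + C₄ * T) ≤ C₀ * L * ((1 + C₄) * S + (1 + C₄) * T) := by
        gcongr
        · calc S = 1 * S := (one_mul S).symm
            _ ≤ _ := by gcongr; exact le_self_add
        · exact le_add_self
    _ = _ := by ring

/-- Fractional product/difference estimate in square-function form. -/
theorem sq_fn_product_estimate (d : ℕ) (hd : 1 ≤ d) (p σ s q q₁ q₂ r₁ r₂ r₃ : ℝ)
    (hp : 0 < p) (hp1 : p < 1) (hσ : 0 < σ) (hσ1 : σ < 1) (hs : 0 < s) (hsσp : s < σ * p)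
    (hq : 1 < q) (hq₁ : 1 < q₁) (hq₂ : 1 < q₂)
    (hr₁ : 1 < r₁) (hr₂ : 1 < r₂) (hr₃ : 1 < r₃)
    (hsum1 : 1 / q = 1 / q₁ + 1 / q₂) (hsum2 : 1 / q = 1 / r₁ + 1 / r₂ + 1 / r₃)
    (hcond1 : 1 < (1 - p) * r₁) (hcond2 : 1 < (p - s / σ) * r₂) :
    ∃ C : ℝ, 0 < C ∧
      ∀ (L : ℝ) (G : ℂ → ℂ), (∀ a b : ℂ, ‖G a - G b‖ ≤ L * ‖a - b‖ ^ p) →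
      ∀ (u v w : EuclideanSpace ℝ (Fin d) → ℂ),
        Measurable u → Measurable v → Measurable w →
        lpNorm d q (sqFn d s (fun z => w z * (G (u z + v z) - G (u z)))) ≤
          ENNReal.ofReal (C * L) *
            (lpNorm d q₁ (sqFn d s w) *
                (lpNorm d (p * q₂) (fun z => (‖v z‖₊ : ℝ≥0∞))) ^ p +
             lpNorm d r₁ (fun z => (‖w z‖₊ : ℝ≥0∞)) *
                (lpNorm d ((p - s / σ) * r₂) (fun z => (‖v z‖₊ : ℝ≥0∞))) ^ (p - s / σ) *
                (lpNorm d ((s / σ) * r₃) (sqFn d σ (fun z => u z + v z)) +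
                 lpNorm d ((s / σ) * r₃) (sqFn d σ u)) ^ (s / σ)) := by
  obtain ⟨C, hC, H⟩ := sq_fn_product_estimate_aux hd hp hp1 hσ hs hsσp hq hq₁ hq₂ hr₁ hr₂ hr₃
    hsum1 hsum2 hcond1 hcond2
  -- Adding `1` makes the constant positive even if `C = 0`.
  refine ⟨C.toReal + 1, by positivity, fun L G hG u v w hu hv hw => ?_⟩
  -- A Hölder constant is nonnegative, as `|G 1 - G 0| ≤ L`.
  have hL : 0 ≤ L := by simpa using (norm_nonneg _).trans (hG 1 0)
  have hG' : ∀ a b : ℂ, ‖G a - G b‖ₑ ≤ ENNReal.ofReal L * ‖a - b‖ₑ ^ p := by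
    intro a b
    rw [← ofReal_norm, ← ofReal_norm,
      ENNReal.ofReal_rpow_of_nonneg (norm_nonneg _) hp.le, ← ENNReal.ofReal_mul hL]
    exact ENNReal.ofReal_le_ofReal (hG a b)
  have hGc : HolderWith L.toNNReal ⟨p, hp.le⟩ G := by
    intro a b
    rw [edist_eq_enorm_sub, edist_eq_enorm_sub]
    exact hG' a b
  have hGm : Measurable G := (hGc.continuous (by exact_mod_cast hp)).measurable
  refine (H _ G ENNReal.ofReal_ne_top hGm hG' u v w hu hv hw).trans ?_
  refine mul_le_mul' ?_ le_rfl
  rw [ENNReal.ofReal_mul (by positivity)]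
  gcongr
  rw [ENNReal.ofReal_add (by positivity) (by norm_num), ENNReal.ofReal_toReal hC]
  exact le_self_add
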